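/- For every natural number N ≥ 3 there exists a multiunitary complex matrix of size N²: a matrix U : (Fin N × Fin N) → (Fin N × Fin N) → ℂ such that U, its reshuffle U^R, and its partial transpose U^Γ are all unitary. (Equivalently, orthogonal quantum Latin squares of size N and AME(4,N) states exist for all N ≥ 3.) -/

import Mathlib

/-!
For `N ≠ 6` a pair of orthogonal Latin squares `L`, `M` of order `N` gives the permutation matrix
sending `(k, l)` to `(L k l, M k l)`. Its reshuffle and partial transpose are permutation matrices
too, because in `(k, l, L k l, M k l)` any two of the four coordinates determine the others
(`exists_multiunitary_of_hasTD`). Such squares exist for all `N ≥ 3`, `N ≠ 6`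
(`hasTD_of_three_le`): odd orders are linear over `ℤ/N`; orders `4, 8, 10, 14` come from explicit
squares orthogonal to their transposes, cyclic on all but one symbol; `12, 30, 32` are products; and
every other even order is `3 t + u` with `t` prime to `6` and `u ≤ t` odd, which Wilson's
construction (`HasTD.wilson`) handles by modifying the lines over `ℤ/t`.

There are no orthogonal Latin squares of order `6`, and a matrix with complex entries is needed.
Look for `U (k, l) (m, n) = g (k - m) (k - l)` if `k - m = l - n` in `ℤ/6`, and `0` otherwise,
that is, for a combination of the operators `Xᵃ Zᵇ ⊗ Xᵃ Z⁻ᵇ` in the shift and clock matrices.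
Then `U`, its reshuffle and its partial transpose are block diagonal with blocks of size `6`
(for `k - l`, `k - l` and `k + l` respectively), and `g = sixArray / √12`, an array of Eisenstein
integers up to scale, makes all blocks unitary, which is a finite computation.
-/

open Matrix

/-- The reshuffle of a matrix indexed by pairs: `U^R (k,l) (m,n) = U (k,m) (l,n)`. -/
def reshuffle {N : ℕ} (U : Matrix (Fin N × Fin N) (Fin N × Fin N) ℂ) :
    Matrix (Fin N × Fin N) (Fin N × Fin N) ℂ :=
  Matrix.of fun p q => U (p.1, q.1) (p.2, q.2)

/-- The partial transpose of a matrix indexed by pairs: `U^Γ (k,l) (m,n) = U (k,n) (m,l)`. -/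
def partialTranspose {N : ℕ} (U : Matrix (Fin N × Fin N) (Fin N × Fin N) ℂ) :
    Matrix (Fin N × Fin N) (Fin N × Fin N) ℂ :=
  Matrix.of fun p q => U (p.1, q.2) (q.1, p.2)

/-! ### Transversal designs -/

/-- The block set of a transversal design with four groups, all labelled by `α`: any two
coordinates of a block take each pair of values exactly once. The rows
`(i, j, L i j, M i j)` of a pair of orthogonal Latin squares form such a design, and every
design arises in this way. -/
def IsTD {α : Type} (R : Set (Fin 4 → α)) : Prop :=
  ∀ i j, i ≠ j → ∀ a b, ∃! r, r ∈ R ∧ r i = a ∧ r j = b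

/-- There is a pair of orthogonal Latin squares with symbols in `α`. -/
def HasTD (α : Type) : Prop := ∃ R : Set (Fin 4 → α), IsTD R

theorem isTD_range {α β : Type} (c : Fin 4 → β → α)
    (h : ∀ i j, i ≠ j → Function.Bijective fun p => (c i p, c j p)) :
    IsTD (Set.range fun p i => c i p) := by
  intro i j hij a b
  obtain ⟨p, hp⟩ := (h i j hij).2 (a, b)
  simp only [Prod.mk.injEq] at hp
  refine ⟨fun k => c k p, ⟨⟨p, rfl⟩, hp.1, hp.2⟩, ?_⟩
  rintro _ ⟨⟨p', rfl⟩, h1, h2⟩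
  have : p' = p := (h i j hij).1 (by
    simp only [Prod.mk.injEq]
    exact ⟨h1.trans hp.1.symm, h2.trans hp.2.symm⟩)
  rw [this]

theorem isTD_range_of_lt {α : Type} [Finite α] (c : Fin 4 → α × α → α)
    (h : ∀ i j, i < j → Function.Injective fun p => (c i p, c j p)) :
    IsTD (Set.range fun p i => c i p) := by
  refine isTD_range c fun i j hij => Finite.injective_iff_bijective.1 ?_
  rcases lt_or_gt_of_ne hij with hlt | hlt
  · exact h i j hlt
  · intro p q hpq
    simp only [Prod.mk.injEq] at hpq
    exact h j i hlt (by simp only [Prod.mk.injEq]; exact hpq.symm)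

theorem IsTD.image {α β : Type} {R : Set (Fin 4 → α)} (hR : IsTD R) (e : α ≃ β) :
    IsTD {r : Fin 4 → β | (fun i => e.symm (r i)) ∈ R} := by
  intro i j hij a b
  obtain ⟨r, ⟨hr, hi, hj⟩, hu⟩ := hR i j hij (e.symm a) (e.symm b)
  refine ⟨fun k => e (r k), ⟨by simpa using hr, by simp [hi], by simp [hj]⟩, ?_⟩
  rintro r' ⟨hr', rfl, rfl⟩
  have := hu _ ⟨hr', rfl, rfl⟩
  funext k
  simp [← this]

theorem HasTD.congr {α β : Type} (h : HasTD α) (e : α ≃ β) : HasTD β :=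
  let ⟨_, hR⟩ := h
  ⟨_, hR.image e⟩

theorem HasTD.prod {α β : Type} (hα : HasTD α) (hβ : HasTD β) : HasTD (α × β) := by
  obtain ⟨R, hR⟩ := hα
  obtain ⟨S, hS⟩ := hβ
  refine ⟨{r | (fun i => (r i).1) ∈ R ∧ (fun i => (r i).2) ∈ S}, ?_⟩
  rintro i j hij ⟨a, a'⟩ ⟨b, b'⟩
  obtain ⟨r, ⟨hr, hi, hj⟩, hu⟩ := hR i j hij a b
  obtain ⟨s, ⟨hs, hi', hj'⟩, hu'⟩ := hS i j hij a' b'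
  refine ⟨fun k => (r k, s k), ⟨⟨hr, hs⟩, by simp [hi, hi'], by simp [hj, hj']⟩, ?_⟩
  rintro t ⟨⟨ht, ht'⟩, h1, h2⟩
  have e1 := hu _ ⟨ht, by simp [h1], by simp [h2]⟩
  have e2 := hu' _ ⟨ht', by simp [h1], by simp [h2]⟩
  funext k
  exact Prod.ext (congrFun e1 k) (congrFun e2 k)

/-- For odd `n` the squares `x + y` and `x + 2y` over `ℤ/n` are orthogonal. -/
theorem hasTD_of_odd {n : ℕ} (hn : Odd n) : HasTD (Fin n) := by
  have : NeZero n := ⟨hn.pos.ne'⟩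
  suffices h : HasTD (ZMod n) from h.congr (Fintype.equivFinOfCardEq (ZMod.card n))
  have h2 : IsUnit (2 : ZMod n) := by
    have := (ZMod.isUnit_iff_coprime 2 n).2 (Nat.coprime_two_left.2 hn)
    simpa using this
  refine ⟨_, isTD_range_of_lt ![fun p => p.1, fun p => p.2, fun p => p.1 + p.2,
    fun p => p.1 + 2 * p.2] ?_⟩
  rintro i j hij ⟨x, y⟩ ⟨x', y'⟩ h
  fin_cases i <;> fin_cases j <;> simp at hij h <;> obtain ⟨ha, hb⟩ := h <;> ext <;> simp
  all_goals first
    | assumption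
    | (subst ha; simpa using hb)
    | (subst ha; simpa [h2.mul_right_inj] using hb)
    | linear_combination hb - ha
    | linear_combination 2 * ha - hb

/-! ### Self-orthogonal squares of small order -/

/-- A square array on `ℤ/q ∪ {∞}`, with `∞` encoded as `q`, invariant under translation by
`ℤ/q`: the entry at `(i, i + d)` is `i + a d`, or `∞` where `a d = q`; the entries at
`(i, ∞)`, `(∞, i)` and `(∞, ∞)` are `i + b`, `i + c` and `∞`. -/
def cyclicSquare (q b c : ℕ) (a : List ℕ) (i j : Fin (q + 1)) : Fin (q + 1) :=
  Fin.ofNat (q + 1) <|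
    if i.1 = q then (if j.1 = q then q else (j.1 + c) % q)
    else if j.1 = q then (i.1 + b) % q
    else
      let v := a.getD ((j.1 + q - i.1) % q) 0
      if v = q then q else (i.1 + v) % q

/-- A Latin square `L` orthogonal to its transpose yields a transversal design. Orthogonality is
witnessed by a map `K` recovering `i` from `(L i j, L j i)`; it then recovers `j` from the swapped
pair. -/
theorem isTD_of_selfOrthogonal {n : ℕ} (L K : Fin n → Fin n → Fin n)
    (hrow : ∀ i j j', L i j = L i j' → j = j')
    (hcol : ∀ i j j', L j i = L j' i → j = j')
    (hK : ∀ i j, K (L i j) (L j i) = i) :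
    IsTD (Set.range fun p i => (![fun p => p.1, fun p => p.2, fun p => L p.1 p.2,
      fun p => L p.2 p.1] : Fin 4 → Fin n × Fin n → Fin n) i p) := by
  refine isTD_range_of_lt _ ?_
  rintro i j hij ⟨x, y⟩ ⟨x', y'⟩ h
  fin_cases i <;> fin_cases j <;> simp at hij h <;> obtain ⟨ha, hb⟩ := h <;> ext1 <;> simp
  all_goals first
    | assumption
    | (subst ha; exact hrow _ _ _ hb)
    | (subst ha; exact hcol _ _ _ hb)
    | (rw [← hK x y, ha, hb, hK])
    | (rw [← hK y x, ha, hb, hK])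

/-- A design on four symbols having a constant block, as needed in `HasTD.wilson`. -/
theorem exists_isTD_four :
    ∃ R : Set (Fin 4 → Option (Fin 3)), IsTD R ∧ (fun _ => none) ∈ R := by
  have h := isTD_of_selfOrthogonal (cyclicSquare 3 2 1 [0, 3, 1])
    (cyclicSquare 3 2 1 [0, 3, 1])
    (by decide +kernel) (by decide +kernel) (by decide +kernel)
  refine ⟨_, h.image finSuccEquivLast, (Fin.last 3, Fin.last 3), ?_⟩
  funext i
  fin_cases i <;> decide

theorem hasTD_four : HasTD (Fin 4) :=
  ⟨_, isTD_of_selfOrthogonal (cyclicSquare 3 2 1 [0, 3, 1])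
    (cyclicSquare 3 2 1 [0, 3, 1])
    (by decide +kernel) (by decide +kernel) (by decide +kernel)⟩

theorem hasTD_eight : HasTD (Fin 8) :=
  ⟨_, isTD_of_selfOrthogonal (cyclicSquare 7 5 4 [0, 7, 1, 4, 6, 3, 2])
    (cyclicSquare 7 5 4 [0, 7, 1, 4, 6, 3, 2])
    (by decide +kernel) (by decide +kernel) (by decide +kernel)⟩

theorem hasTD_ten : HasTD (Fin 10) :=
  ⟨_, isTD_of_selfOrthogonal (cyclicSquare 9 7 6 [0, 9, 3, 5, 8, 1, 4, 6, 2])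
    (cyclicSquare 9 7 6 [0, 9, 4, 8, 3, 6, 1, 5, 2])
    (by decide +kernel) (by decide +kernel) (by decide +kernel)⟩

theorem hasTD_fourteen : HasTD (Fin 14) :=
  ⟨_, isTD_of_selfOrthogonal (cyclicSquare 13 8 7 [0, 13, 3, 7, 12, 10, 2, 5, 11, 6, 9, 4, 1])
    (cyclicSquare 13 12 11 [0, 13, 7, 10, 8, 6, 3, 2, 4, 11, 9, 1, 5])
    (by decide +kernel) (by decide +kernel) (by decide +kernel)⟩

/-! ### Wilson's construction -/

theorem isUnit_sub_of_coprime_six {t : ℕ} (ht : t.Coprime 6) {i j : Fin 4} (hij : i ≠ j) :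
    IsUnit ((i.1 : ZMod t) - (j.1 : ZMod t)) := by
  have h2 : IsUnit (2 : ZMod t) := by
    simpa using (ZMod.isUnit_iff_coprime 2 t).2
      (Nat.Coprime.coprime_dvd_left (by norm_num : 2 ∣ 6) ht.symm)
  have h3 : IsUnit (3 : ZMod t) := by
    simpa using (ZMod.isUnit_iff_coprime 3 t).2
      (Nat.Coprime.coprime_dvd_left (by norm_num : 3 ∣ 6) ht.symm)
  have key : ∀ x : ZMod t, x = 1 ∨ x = 2 ∨ x = 3 ∨ x = -1 ∨ x = -2 ∨ x = -3 → IsUnit x := by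
    rintro x (rfl | rfl | rfl | rfl | rfl | rfl)
    exacts [isUnit_one, h2, h3, isUnit_one.neg, h2.neg, h3.neg]
  apply key
  fin_cases i <;> fin_cases j <;> simp at hij ⊢ <;> norm_num

/-- The lines `i ↦ s + i q` over `ℤ/t` form a transversal design with the four groups
`i = 0, 1, 2, 3` when `t` is prime to `6`; the slope `q` serves as a fifth group. -/
theorem exists_line {t : ℕ} (ht : t.Coprime 6) {i j : Fin 4} (hij : i ≠ j) (x z : ZMod t) :
    ∃ s q : ZMod t, s + i.1 * q = x ∧ s + j.1 * q = z := by
  obtain ⟨v, hv⟩ := isUnit_sub_of_coprime_six ht hij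
  have hv' : ((i.1 : ZMod t) - j.1) * (↑v⁻¹ : ZMod t) = 1 := by rw [← hv]; simp
  refine ⟨x - i.1 * (↑v⁻¹ * (x - z)), ↑v⁻¹ * (x - z), by ring, ?_⟩
  linear_combination (z - x) * hv'

theorem line_unique {t : ℕ} (ht : t.Coprime 6) {i j : Fin 4} (hij : i ≠ j)
    {s q s' q' : ZMod t} (h1 : s + i.1 * q = s' + i.1 * q')
    (h2 : s + j.1 * q = s' + j.1 * q') : s = s' ∧ q = q' := by
  have hq : q = q' := by
    apply (isUnit_sub_of_coprime_six ht hij).mul_right_injective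
    simp only
    linear_combination h1 - h2
  subst hq
  exact ⟨by linear_combination h1, rfl⟩

/-- The block obtained by spreading a block `b` on `κ ∪ {∞}` over the line `i ↦ s + i q`,
with `∞` replaced by the new point `y`. -/
def spread {κ υ : Type} {t : ℕ} (s q : ZMod t) (y : υ) (b : Fin 4 → Option κ) :
    Fin 4 → (κ × ZMod t) ⊕ υ :=
  fun i => (b i).elim (Sum.inr y) fun c => Sum.inl (c, s + i.1 * q)

theorem spread_eq_inl {κ υ : Type} {t : ℕ} {s q : ZMod t} {y : υ} {b : Fin 4 → Option κ}
    {i : Fin 4} {c : κ} {x : ZMod t} :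
    spread s q y b i = Sum.inl (c, x) ↔ b i = some c ∧ s + i.1 * q = x := by
  unfold spread
  cases b i <;> simp

theorem spread_eq_inr {κ υ : Type} {t : ℕ} {s q : ZMod t} {y : υ} {b : Fin 4 → Option κ}
    {i : Fin 4} {z : υ} :
    spread s q y b i = Sum.inr z ↔ b i = none ∧ y = z := by
  unfold spread
  cases b i <;> simp

/-- Wilson's construction. The points of each group are `κ × ℤ/t` together with new points
`υ ⊆ ℤ/t`. A line whose slope lies outside `υ` is multiplied by a design on `κ`; a line of
slope `y ∈ υ` by a design on `κ ∪ {∞}`, with `∞` becoming the new point `y`, and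
without the block at infinity. A design on `υ` covers the remaining pairs of new points. -/
theorem HasTD.wilson {κ υ : Type} {t : ℕ} (ht : t.Coprime 6) (hκ : HasTD κ)
    (hκ' : ∃ R : Set (Fin 4 → Option κ), IsTD R ∧ (fun _ => none) ∈ R)
    (hυ : HasTD υ) (ι : υ ↪ ZMod t) : HasTD ((κ × ZMod t) ⊕ υ) := by
  obtain ⟨A, hA⟩ := hκ
  obtain ⟨B, hB, hB0⟩ := hκ'
  obtain ⟨D, hD⟩ := hυ
  -- a block of `B` through `∞` twice is the block at infinity
  have hBinf : ∀ b ∈ B, b ≠ (fun _ => none) → ∀ i j, i ≠ j → b i = none → b j = none → False :=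
    fun b hb hne i j hij hi hj =>
      hne ((hB i j hij none none).unique ⟨hb, hi, hj⟩ ⟨hB0, rfl, rfl⟩)
  refine ⟨{r | (∃ s q, q ∉ Set.range ι ∧ ∃ a ∈ A,
      r = fun i => Sum.inl (a i, s + (i.1 : ZMod t) * q)) ∨
    (∃ s y, ∃ b ∈ B, b ≠ (fun _ => none) ∧ r = spread s (ι y) y b) ∨
    (∃ d ∈ D, r = fun i => Sum.inr (d i))}, ?_⟩
  -- the pairs of one old and one new point, in either order
  have mixed : ∀ i j : Fin 4, i ≠ j → ∀ (c : κ) (x : ZMod t) (y : υ),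
      ∃ b ∈ B, b ≠ (fun _ => none) ∧ b i = some c ∧ b j = none ∧
        ∀ s' y', ∀ b' ∈ B, spread s' (ι y') y' b' i = Sum.inl (c, x) →
          spread s' (ι y') y' b' j = Sum.inr y →
          spread s' (ι y') y' b' = spread (x - (i.1 : ZMod t) * ι y) (ι y) y b := by
    intro i j hij c x y
    obtain ⟨b, ⟨hb, hbi, hbj⟩, hbu⟩ := hB i j hij (some c) none
    refine ⟨b, hb, fun h => by simp [h] at hbi, hbi, hbj, ?_⟩
    intro s' y' b' hb' h1 h2
    rw [spread_eq_inl] at h1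
    rw [spread_eq_inr] at h2
    obtain ⟨h1, rfl⟩ := h1
    obtain ⟨h2, rfl⟩ := h2
    rw [hbu b' ⟨hb', h1, h2⟩, add_sub_cancel_right]
  rintro i j hij (⟨c, x⟩ | y) (⟨c', x'⟩ | y')
  · obtain ⟨s, q, hs, hs'⟩ := exists_line ht hij x x'
    by_cases hq : q ∈ Set.range ι
    · obtain ⟨y, rfl⟩ := hq
      obtain ⟨b, ⟨hb, hbi, hbj⟩, hbu⟩ := hB i j hij (some c) (some c')
      refine ⟨spread s (ι y) y b, ⟨Or.inr (Or.inl ⟨s, y, b, hb, fun h => by simp [h] at hbi, rfl⟩),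
        spread_eq_inl.2 ⟨hbi, hs⟩, spread_eq_inl.2 ⟨hbj, hs'⟩⟩, ?_⟩
      rintro _ ⟨⟨s₁, q₁, hq₁, a, ha, rfl⟩ | ⟨s₁, y₁, b₁, hb₁, -, rfl⟩ | ⟨d, hd, rfl⟩, h1, h2⟩
      · simp only [Sum.inl.injEq, Prod.mk.injEq] at h1 h2
        obtain ⟨-, rfl⟩ := line_unique ht hij (h1.2.trans hs.symm) (h2.2.trans hs'.symm)
        exact absurd ⟨y, rfl⟩ hq₁
      · rw [spread_eq_inl] at h1 h2
        obtain ⟨rfl, hy⟩ := line_unique ht hij (h1.2.trans hs.symm) (h2.2.trans hs'.symm)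
        obtain rfl := ι.injective hy
        rw [hbu b₁ ⟨hb₁, h1.1, h2.1⟩]
      · simp at h1
    · obtain ⟨a, ⟨ha, hai, haj⟩, hau⟩ := hA i j hij c c'
      refine ⟨fun k => Sum.inl (a k, s + k.1 * q), ⟨Or.inl ⟨s, q, hq, a, ha, rfl⟩,
        by simp [hai, hs], by simp [haj, hs']⟩, ?_⟩
      rintro _ ⟨⟨s₁, q₁, hq₁, a₁, ha₁, rfl⟩ | ⟨s₁, y₁, b₁, hb₁, -, rfl⟩ | ⟨d, hd, rfl⟩, h1, h2⟩
      · simp only [Sum.inl.injEq, Prod.mk.injEq] at h1 h2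
        obtain ⟨rfl, rfl⟩ := line_unique ht hij (h1.2.trans hs.symm) (h2.2.trans hs'.symm)
        rw [hau a₁ ⟨ha₁, h1.1, h2.1⟩]
      · rw [spread_eq_inl] at h1 h2
        obtain ⟨-, rfl⟩ := line_unique ht hij (h1.2.trans hs.symm) (h2.2.trans hs'.symm)
        exact absurd ⟨y₁, rfl⟩ hq
      · simp at h1
  · obtain ⟨b, hb, hne, hbi, hbj, hu⟩ := mixed i j hij c x y'
    refine ⟨_, ⟨Or.inr (Or.inl ⟨_, y', b, hb, hne, rfl⟩), spread_eq_inl.2 ⟨hbi, sub_add_cancel _ _⟩,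
      spread_eq_inr.2 ⟨hbj, rfl⟩⟩, ?_⟩
    rintro _ ⟨⟨s₁, q₁, hq₁, a₁, ha₁, rfl⟩ | ⟨s₁, y₁, b₁, hb₁, -, rfl⟩ | ⟨d, hd, rfl⟩, h1, h2⟩
    · simp at h2
    · exact hu _ _ _ hb₁ h1 h2
    · simp at h1
  · obtain ⟨b, hb, hne, hbi, hbj, hu⟩ := mixed j i hij.symm c' x' y
    refine ⟨_, ⟨Or.inr (Or.inl ⟨_, y, b, hb, hne, rfl⟩), spread_eq_inr.2 ⟨hbj, rfl⟩,
      spread_eq_inl.2 ⟨hbi, sub_add_cancel _ _⟩⟩, ?_⟩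
    rintro _ ⟨⟨s₁, q₁, hq₁, a₁, ha₁, rfl⟩ | ⟨s₁, y₁, b₁, hb₁, -, rfl⟩ | ⟨d, hd, rfl⟩, h1, h2⟩
    · simp at h1
    · exact hu _ _ _ hb₁ h2 h1
    · simp at h2
  · obtain ⟨d, ⟨hd, hdi, hdj⟩, hdu⟩ := hD i j hij y y'
    refine ⟨fun k => Sum.inr (d k), ⟨Or.inr (Or.inr ⟨d, hd, rfl⟩), by simp [hdi], by simp [hdj]⟩, ?_⟩
    rintro _ ⟨⟨s₁, q₁, hq₁, a₁, ha₁, rfl⟩ | ⟨s₁, y₁, b₁, hb₁, hne, rfl⟩ | ⟨d₁, hd₁, rfl⟩, h1, h2⟩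
    · simp at h1
    · rw [spread_eq_inr] at h1 h2
      exact (hBinf b₁ hb₁ hne i j hij h1.1 h2.1).elim
    · rw [hdu d₁ ⟨hd₁, by simpa using h1, by simpa using h2⟩]

theorem HasTD.wilson_three {t u n : ℕ} (ht : t.Coprime 6) (hu : Odd u) (hut : u ≤ t)
    (hn : n = 3 * t + u) : HasTD (Fin n) := by
  have : NeZero t := ⟨by have := hu.pos; omega⟩
  obtain ⟨ι⟩ := Function.Embedding.nonempty_of_card_le (α := Fin u) (β := ZMod t)
    (by simpa [ZMod.card] using hut)
  refine (HasTD.wilson ht (hasTD_of_odd (n := 3) (by decide)) exists_isTD_four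
    (hasTD_of_odd hu) ι).congr (Fintype.equivFinOfCardEq ?_)
  simp [ZMod.card, hn]

theorem HasTD.mul {a b : ℕ} (ha : HasTD (Fin a)) (hb : HasTD (Fin b)) : HasTD (Fin (a * b)) :=
  (ha.prod hb).congr finProdFinEquiv

/-- Orthogonal Latin squares exist for every order at least `3` other than `6`. -/
theorem hasTD_of_three_le {n : ℕ} (hn : 3 ≤ n) (h6 : n ≠ 6) : HasTD (Fin n) := by
  rcases Nat.even_or_odd n with he | ho
  swap
  · exact hasTD_of_odd ho
  have h3 : HasTD (Fin 3) := hasTD_of_odd (by decide)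
  have cop : ∀ t, t % 2 = 1 → t % 3 ≠ 0 → t.Coprime 6 := by
    intro t h2 h3
    have a : t.Coprime 2 := (Nat.coprime_two_right).2 (Nat.odd_iff.2 h2)
    have b : t.Coprime 3 := ((Nat.Prime.coprime_iff_not_dvd Nat.prime_three).2
      (fun h => h3 (Nat.mod_eq_zero_of_dvd h))).symm
    exact Nat.Coprime.mul_right a b
  have wil : ∀ t u, t % 2 = 1 → t % 3 ≠ 0 → u % 2 = 1 → u ≤ t → n = 3 * t + u → HasTD (Fin n) :=
    fun t u h2 h3 hu hut h => HasTD.wilson_three (cop t h2 h3) (Nat.odd_iff.2 hu) hut h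
  rw [Nat.even_iff] at he
  by_cases hs : n = 4 ∨ n = 8 ∨ n = 10 ∨ n = 12 ∨ n = 14 ∨ n = 30 ∨ n = 32
  · rcases hs with rfl | rfl | rfl | rfl | rfl | rfl | rfl
    exacts [hasTD_four, hasTD_eight, hasTD_ten, h3.mul hasTD_four, hasTD_fourteen,
      h3.mul hasTD_ten, hasTD_four.mul hasTD_eight]
  -- write `n = 3 t + u` with `t ≡ ±1 mod 6` and `u` odd, according to `n mod 18`
  · rcases (by omega : n % 18 ≤ 2 ∨ (4 ≤ n % 18 ∧ n % 18 ≤ 14) ∨ n % 18 = 16) with h | h | h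
    · exact wil (6 * (n / 18) - 1) (n % 18 + 3) (by omega) (by omega) (by omega) (by omega)
        (by omega)
    · exact wil (6 * (n / 18) + 1) (n % 18 - 3) (by omega) (by omega) (by omega) (by omega)
        (by omega)
    · exact wil (6 * (n / 18) + 5) 1 (by omega) (by omega) (by omega) (by omega) (by omega)

/-! ### From transversal designs to multiunitary matrices -/

open Classical in
/-- The matrix of a relation that is the graph of a bijection is unitary. -/
theorem relMatrix_mul_conjTranspose {β : Type} [Fintype β] [DecidableEq β] (P : β → β → Prop)
    (h1 : ∀ p, ∃! q, P p q) (h2 : ∀ q, ∃! p, P p q) :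
    (Matrix.of fun p q => if P p q then (1 : ℂ) else 0) *
      (Matrix.of fun p q => if P p q then (1 : ℂ) else 0)ᴴ = 1 := by
  ext p p'
  obtain ⟨q, hq, hqu⟩ := h1 p
  rw [Matrix.mul_apply, Finset.sum_eq_single q]
  · by_cases h : p = p'
    · subst h; simp [hq]
    · have : ¬ P p' q := fun h' => h ((h2 q).unique hq h')
      simp [this, h]
  · intro q' _ hne
    have : ¬ P p q' := fun h => hne (hqu _ h)
    simp [this]
  · simp

/-- Here `f a b m n` is the block with entries `a`, `b`, `m`, `n` in the places `i`, `j`, `k`,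
`l`, which are the four coordinates in some order. -/
theorem IsTD.existsUnique_pair {α : Type} {R : Set (Fin 4 → α)} (hR : IsTD R)
    {i j : Fin 4} (hij : i ≠ j) (f : α → α → α → α → Fin 4 → α) (k l : Fin 4)
    (a b : α) (h1 : ∀ m n, f a b m n i = a ∧ f a b m n j = b)
    (h2 : ∀ m n, f a b m n k = m ∧ f a b m n l = n)
    (h3 : ∀ r : Fin 4 → α, r i = a → r j = b → f a b (r k) (r l) = r) :
    ∃! q : α × α, f a b q.1 q.2 ∈ R := by
  obtain ⟨r, ⟨hr, hi, hj⟩, hu⟩ := hR i j hij a b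
  refine ⟨(r k, r l), by simpa only [h3 r hi hj] using hr, ?_⟩
  rintro ⟨m, n⟩ hmn
  have := hu _ ⟨hmn, (h1 m n).1, (h1 m n).2⟩
  rw [← this]
  simp [(h2 m n).1, (h2 m n).2]

open Classical in
theorem exists_multiunitary_of_hasTD {N : ℕ} (h : HasTD (Fin N)) :
    ∃ U : Matrix (Fin N × Fin N) (Fin N × Fin N) ℂ,
      U * Uᴴ = 1 ∧
      reshuffle U * (reshuffle U)ᴴ = 1 ∧
      partialTranspose U * (partialTranspose U)ᴴ = 1 := by
  obtain ⟨R, hR⟩ := h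
  have ext4 : ∀ r s : Fin 4 → Fin N, r 0 = s 0 → r 1 = s 1 → r 2 = s 2 → r 3 = s 3 → r = s := by
    intro r s h0 h1 h2 h3
    funext i
    fin_cases i <;> assumption
  refine ⟨Matrix.of fun p q => if ![p.1, p.2, q.1, q.2] ∈ R then 1 else 0, ?_, ?_, ?_⟩
  · apply relMatrix_mul_conjTranspose
    · rintro ⟨a, b⟩
      exact hR.existsUnique_pair (i := 0) (j := 1) (by decide) (fun a b m n => ![a, b, m, n]) 2 3
        a b (by simp) (by simp) (fun r h1 h2 => ext4 _ _ h1.symm h2.symm rfl rfl)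
    · rintro ⟨a, b⟩
      exact hR.existsUnique_pair (i := 2) (j := 3) (by decide) (fun a b m n => ![m, n, a, b]) 0 1
        a b (by simp) (by simp) (fun r h1 h2 => ext4 _ _ rfl rfl h1.symm h2.symm)
  · refine relMatrix_mul_conjTranspose
      (fun p q : Fin N × Fin N => ![p.1, q.1, p.2, q.2] ∈ R) ?_ ?_
    · rintro ⟨a, b⟩
      exact hR.existsUnique_pair (i := 0) (j := 2) (by decide) (fun a b m n => ![a, m, b, n]) 1 3
        a b (by simp) (by simp) (fun r h1 h2 => ext4 _ _ h1.symm rfl h2.symm rfl)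
    · rintro ⟨a, b⟩
      exact hR.existsUnique_pair (i := 1) (j := 3) (by decide) (fun a b m n => ![m, a, n, b]) 0 2
        a b (by simp) (by simp) (fun r h1 h2 => ext4 _ _ rfl h1.symm rfl h2.symm)
  · refine relMatrix_mul_conjTranspose
      (fun p q : Fin N × Fin N => ![p.1, q.2, q.1, p.2] ∈ R) ?_ ?_
    · rintro ⟨a, b⟩
      exact hR.existsUnique_pair (i := 0) (j := 3) (by decide) (fun a b m n => ![a, n, m, b]) 2 1
        a b (by simp) (by simp) (fun r h1 h2 => ext4 _ _ h1.symm rfl rfl h2.symm)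
    · rintro ⟨a, b⟩
      exact hR.existsUnique_pair (i := 2) (j := 1) (by decide) (fun a b m n => ![m, b, a, n]) 0 3
        a b (by simp) (by simp) (fun r h1 h2 => ext4 _ _ rfl h2.symm h1.symm rfl)

/-! ### Order six -/

/-- The primitive cube root of unity `exp (2πi/3)`. -/
noncomputable def cubeRoot : ℂ := ⟨-1 / 2, √3 / 2⟩

theorem cubeRoot_sq : cubeRoot * cubeRoot = -1 - cubeRoot := by
  have h : √3 * √3 = 3 := Real.mul_self_sqrt (by norm_num)
  apply Complex.ext <;> simp [cubeRoot] <;> nlinarith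

theorem conj_cubeRoot : star cubeRoot = -1 - cubeRoot := by
  apply Complex.ext <;> simp [cubeRoot]; norm_num

/-- The Eisenstein integer with coordinates `(a, b)`, namely `a + b ω`, as a complex number. -/
noncomputable def eis (z : ℤ × ℤ) : ℂ := z.1 + z.2 * cubeRoot

/-- The product `z * conj w` of Eisenstein integers, in coordinates. -/
def herm (z w : ℤ × ℤ) : ℤ × ℤ :=
  (z.1 * w.1 - z.1 * w.2 + z.2 * w.2, z.2 * w.1 - z.1 * w.2)

theorem eis_mul_star (z w : ℤ × ℤ) : eis z * star (eis w) = eis (herm z w) := by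
  have h := cubeRoot_sq
  simp only [eis, herm, star_add, star_mul', conj_cubeRoot]
  simp only [Complex.star_def, map_intCast]
  push_cast
  linear_combination (-(z.2 : ℂ) * w.2) * h

theorem eis_sum {β : Type} (s : Finset β) (f : β → ℤ × ℤ) :
    ∑ i ∈ s, eis (f i) = eis (∑ i ∈ s, f i) := by
  simp [eis, Prod.fst_sum, Prod.snd_sum, Finset.sum_add_distrib, Finset.sum_mul]

/-- The coordinates of `ω ^ n`. -/
def omegaPow (n : ℕ) : ℤ × ℤ :=
  if n % 3 = 0 then (1, 0) else if n % 3 = 1 then (0, 1) else (-1, -1)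

/-- The array `ω ^ c(d) * (ω ^ p(a) + (-1) ^ d * ω ^ r(a))` with `p = (0,2,1,2,0,1)`,
`r = (2,2,0,0,0,0)` and `c = (0,2,0,0,2,0)`. -/
def sixArray (a d : Fin 6) : ℤ × ℤ :=
  let c : Fin 6 → ℕ := ![0, 2, 0, 0, 2, 0]
  let p : Fin 6 → ℕ := ![0, 2, 1, 2, 0, 1]
  let r : Fin 6 → ℕ := ![2, 2, 0, 0, 0, 0]
  omegaPow (c d + p a) + (-1) ^ d.1 • omegaPow (c d + r a)

/-- A matrix each of whose rows `(k, l)` has, for every `m`, at most one nonzero entry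
`(m, n)`, at `n = e k l m`. -/
noncomputable def sixMatrix (e : Fin 6 → Fin 6 → Fin 6 → Fin 6)
    (H : Fin 6 → Fin 6 → Fin 6 → ℤ × ℤ) : Matrix (Fin 6 × Fin 6) (Fin 6 × Fin 6) ℂ :=
  Matrix.of fun p q =>
    if q.2 = e p.1 p.2 q.1 then ((√12 : ℝ) : ℂ)⁻¹ * eis (H p.1 p.2 q.1) else 0

theorem sixMatrix_unitary (e : Fin 6 → Fin 6 → Fin 6 → Fin 6)
    (H : Fin 6 → Fin 6 → Fin 6 → ℤ × ℤ)
    (h : ∀ k l k' l', (∑ m, if e k l m = e k' l' m then herm (H k l m) (H k' l' m) else 0) =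
      if k = k' ∧ l = l' then (12, 0) else 0) :
    sixMatrix e H * (sixMatrix e H)ᴴ = 1 := by
  have h12 : ((√12 : ℝ) : ℂ)⁻¹ * ((√12 : ℝ) : ℂ)⁻¹ = 12⁻¹ := by
    rw [← mul_inv, ← Complex.ofReal_mul, Real.mul_self_sqrt (by norm_num)]
    norm_num
  ext ⟨k, l⟩ ⟨k', l'⟩
  have hterm : ∀ m n, sixMatrix e H (k, l) (m, n) * star (sixMatrix e H (k', l') (m, n)) =
      if n = e k l m then
        12⁻¹ * eis (if e k l m = e k' l' m then herm (H k l m) (H k' l' m) else 0) else 0 := by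
    intro m n
    simp only [sixMatrix, Matrix.of_apply]
    by_cases hn : n = e k l m
    · subst hn
      by_cases hn' : e k l m = e k' l' m
      · simp only [hn', if_true, star_mul', ← eis_mul_star, ← h12]
        simp only [Complex.star_def, map_inv₀, Complex.conj_ofReal]
        ring
      · simp [hn', eis]
    · simp [hn]
  simp only [Matrix.mul_apply, Fintype.sum_prod_type, Matrix.conjTranspose_apply, hterm,
    Finset.sum_ite_eq', Finset.mem_univ, if_true]
  rw [← Finset.mul_sum, eis_sum, h]
  by_cases hk : k = k' ∧ l = l'
  · obtain ⟨rfl, rfl⟩ := hk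
    simp [eis]
  · have : (k, l) ≠ (k', l') := fun h => hk (by simpa using h)
    simp [hk, eis]

theorem exists_multiunitary_six :
    ∃ U : Matrix (Fin 6 × Fin 6) (Fin 6 × Fin 6) ℂ,
      U * Uᴴ = 1 ∧
      reshuffle U * (reshuffle U)ᴴ = 1 ∧
      partialTranspose U * (partialTranspose U)ᴴ = 1 := by
  have hR : reshuffle (sixMatrix (fun k l m => m + (l - k)) fun k l m => sixArray (k - m) (k - l)) =
      sixMatrix (fun k l m => m + (l - k)) fun k l m => sixArray (k - l) (k - m) := by
    ext ⟨k, l⟩ ⟨m, n⟩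
    have h : ∀ k l m : Fin 6, l + (m - k) = m + (l - k) := by decide
    simp [reshuffle, sixMatrix, h k l m]
  have hΓ : partialTranspose
      (sixMatrix (fun k l m => m + (l - k)) fun k l m => sixArray (k - m) (k - l)) =
      sixMatrix (fun k l m => k + l - m) fun k l m => sixArray (k - m) (m - l) := by
    ext ⟨k, l⟩ ⟨m, n⟩
    have h : ∀ k l m n : Fin 6, l = m + (n - k) ↔ n = k + l - m := by decide
    have h' : ∀ k l m : Fin 6, k - (k + l - m) = m - l := by decide
    by_cases hn : n = k + l - m
    · have hl : l = m + (k + l - m - k) := (h k l m _).2 rfl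
      simp [partialTranspose, sixMatrix, hn, h', ← hl]
    · simp [partialTranspose, sixMatrix, h k l m n, hn]
  refine ⟨_, sixMatrix_unitary _ _ ?_, hR ▸ sixMatrix_unitary _ _ ?_,
    hΓ ▸ sixMatrix_unitary _ _ ?_⟩ <;> decide +kernel

/-- For every `N ≥ 3` there exists a multiunitary matrix of size `N²`:
a matrix `U` over `Fin N × Fin N` such that `U`, its reshuffle, and its partial
transpose are all unitary. -/
theorem exists_multiunitary_matrix_of_three_le (N : ℕ) (hN : 3 ≤ N) :
    ∃ U : Matrix (Fin N × Fin N) (Fin N × Fin N) ℂ,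
      U * Uᴴ = 1 ∧
      reshuffle U * (reshuffle U)ᴴ = 1 ∧
      partialTranspose U * (partialTranspose U)ᴴ = 1 := by
  by_cases h6 : N = 6
  · subst h6
    exact exists_multiunitary_six
  · exact exists_multiunitary_of_hasTD (hasTD_of_three_le hN h6)
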